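/- For every complex number q with 0 < |q| < 1, one has ∑_{i,j,k,l ≥ 0} q^{i²+j²+k²+l²−il−jl−kl−i+j+k} / ((q²;q²)_i (q²;q²)_j (q²;q²)_k (q²;q²)_l) = 2 J_4⁹ / (J_2⁷ J_8²) + J_2⁷ J_8² / (J_1⁴ J_4⁵). -/

import Mathlib

open scoped BigOperators

/-- The infinite q-Pochhammer symbol `(a; q)_∞ = ∏_{k=0}^∞ (1 - a q^k)`. -/
noncomputable def qPochInf (a q : ℂ) : ℂ := ∏' n : ℕ, (1 - a * q ^ n)

/-- The finite q-Pochhammer symbol `(a; q)_n = ∏_{k=0}^{n-1} (1 - a q^k)`. -/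
noncomputable def qPoch (a q : ℂ) (n : ℕ) : ℂ :=
  Finset.prod (Finset.range n) (fun k => 1 - a * q ^ k)

/-- `J_m = (q^m; q^m)_∞`. -/
noncomputable def J (q : ℂ) (m : ℕ) : ℂ := qPochInf (q ^ m) (q ^ m)

/-- `J_{a,m} = (q^a; q^m)_∞ (q^{m-a}; q^m)_∞ (q^m; q^m)_∞`. -/
noncomputable def Jam (q : ℂ) (a m : ℕ) : ℂ :=
  qPochInf (q ^ a) (q ^ m) * qPochInf (q ^ (m - a)) (q ^ m) * qPochInf (q ^ m) (q ^ m)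

/-!
Write the summand as `q^(l²) / (q²;q²)_l` times one Euler term in each of `i`, `j`, `k`: Euler's
series `∑ q^(n(n-1)/2) zⁿ / (q;q)_n = (-z;q)_∞` sums these out and leaves a series in `l` whose
terms contain `(-q^(-l);q²)_∞` and `(-q^(2-l);q²)_∞²`. Pulling the powers `q^(-l)` out of the
infinite products is possible separately for each parity of `l`. The even part becomes, in base
`q²`, Andrews' `q`-analogue of Gauss's second summation theorem at `a = b = -1`; the odd part
becomes his `q`-analogue of Bailey's theorem at `a = c = -q`, `b = q³`.

Both summation theorems follow from a contiguous relation that moves one parameter `x` to `xq²`.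
The relation is a telescoping sum, and iterating it drives the parameter to `0`.
-/

open Filter Topology Finset

section Telescoping

theorem mul_tsum_eq_mul_tsum_of_telescope {R : Type*} [Ring R] [TopologicalSpace R]
    [IsTopologicalRing R] [T2Space R] {f g G : ℕ → R} {c d : R} (hf : Summable f)
    (hg : Summable g) (hG : Tendsto G atTop (𝓝 0)) (zero : c * f 0 - d * g 0 = G 0)
    (succ : ∀ n, c * f (n + 1) - d * g (n + 1) = G (n + 1) - G n) :
    c * ∑' n, f n = d * ∑' n, g n := by
  have partial_sum (n : ℕ) : ∑ k ∈ range (n + 1), (c * f k - d * g k) = G n := by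
    rw [sum_range_succ', sum_congr rfl fun k _ => succ k, sum_range_sub, zero, sub_add_cancel]
  have hsum := (hf.hasSum.mul_left c).sub (hg.hasSum.mul_left d)
  have hlim := (hsum.tendsto_sum_nat.comp (tendsto_add_atTop_nat 1)).congr partial_sum
  exact sub_eq_zero.mp (tendsto_nhds_unique hlim hG)

theorem mul_tsum_eq_mul_tsum_of_step {ι R : Type*} [NormedCommRing R] [CompleteSpace R]
    {F : ℕ → ι → R} {G : ι → R} {c d : ℕ → R} {C D : R} {bound : ι → ℝ}
    (hc : Tendsto (fun N => ∏ k ∈ range N, c k) atTop (𝓝 C))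
    (hd : Tendsto (fun N => ∏ k ∈ range N, d k) atTop (𝓝 D)) (hbound : Summable bound)
    (hF : ∀ N n, ‖F N n‖ ≤ bound n) (hG : ∀ n, Tendsto (fun N => F N n) atTop (𝓝 (G n)))
    (step : ∀ N, c N * ∑' n, F N n = d N * ∑' n, F (N + 1) n) :
    C * ∑' n, F 0 n = D * ∑' n, G n := by
  have iterated (N : ℕ) :
      (∏ k ∈ range N, c k) * ∑' n, F 0 n = (∏ k ∈ range N, d k) * ∑' n, F N n := by
    induction N with
    | zero => simp
    | succ N ih =>
      rw [prod_range_succ, prod_range_succ]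
      linear_combination c N * ih + (∏ k ∈ range N, d k) * step N
  have hlim := tendsto_tsum_of_dominated_convergence hbound hG (.of_forall hF)
  exact tendsto_nhds_unique ((hc.mul_const _).congr iterated) (hd.mul hlim)

end Telescoping

theorem hasSum_mul_of_summable_norm {ι κ R : Type*} [NormedRing R] [CompleteSpace R] {f : ι → R}
    {g : κ → R} {x y : R} (hf : HasSum f x) (hg : HasSum g y) (hf' : Summable fun i => ‖f i‖)
    (hg' : Summable fun k => ‖g k‖) : HasSum (fun p : ι × κ => f p.1 * g p.2) (x * y) :=
  hf.mul hg (summable_mul_of_summable_norm hf' hg')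

theorem summable_norm_pow_choose_two_mul_pow {𝕜 : Type*} [NormedField 𝕜] {q : 𝕜} (hq : ‖q‖ < 1)
    (z : 𝕜) : Summable fun n : ℕ => ‖q ^ n.choose 2 * z ^ n‖ := by
  have ratio_tendsto : Tendsto (fun n : ℕ => ‖q‖ ^ n * ‖z‖) atTop (𝓝 0) := by
    simpa using (tendsto_pow_atTop_nhds_zero_of_lt_one (norm_nonneg q) hq).mul_const ‖z‖
  refine summable_of_ratio_norm_eventually_le one_half_lt_one ?_
  filter_upwards [ratio_tendsto.eventually_le_const one_half_pos] with n hn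
  have ratio : ‖q ^ (n + 1).choose 2 * z ^ (n + 1)‖ =
      ‖q‖ ^ n * ‖z‖ * ‖q ^ n.choose 2 * z ^ n‖ := by
    rw [Nat.choose_succ_succ', Nat.choose_one_right]
    simp only [norm_mul, norm_pow]
    ring
  rw [norm_norm, norm_norm, ratio]
  gcongr

theorem two_mul_choose_succ_two (n : ℕ) : 2 * (n + 1).choose 2 = n * n + n := by
  have := Nat.add_one_mul_choose_eq n 1
  rw [Nat.choose_one_right] at this
  linarith

section QPochhammer

variable {a q : ℂ}

@[simp]
theorem qPoch_zero (a q : ℂ) : qPoch a q 0 = 1 := prod_range_zero _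

@[simp]
theorem qPoch_zero_left (q : ℂ) (n : ℕ) : qPoch 0 q n = 1 := by simp [qPoch]

@[simp]
theorem qPochInf_zero_left (q : ℂ) : qPochInf 0 q = 1 := by simp [qPochInf]

theorem qPoch_succ (a q : ℂ) (n : ℕ) : qPoch a q (n + 1) = qPoch a q n * (1 - a * q ^ n) :=
  prod_range_succ _ _

theorem qPoch_add (a q : ℂ) (m n : ℕ) :
    qPoch a q (m + n) = qPoch a q m * qPoch (a * q ^ m) q n := by
  simp only [qPoch, prod_range_add, pow_add, mul_assoc]

theorem qPoch_succ' (a q : ℂ) (n : ℕ) : qPoch a q (n + 1) = (1 - a) * qPoch (a * q) q n := by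
  rw [add_comm, qPoch_add]
  simp [qPoch]

theorem qPoch_mul_qPoch_neg (a q : ℂ) (n : ℕ) :
    qPoch a q n * qPoch (-a) q n = qPoch (a ^ 2) (q ^ 2) n := by
  simp only [qPoch, ← prod_mul_distrib]
  exact prod_congr rfl fun k _ => by ring

theorem qPoch_two_mul (a q : ℂ) (n : ℕ) :
    qPoch a q (2 * n) = qPoch a (q ^ 2) n * qPoch (a * q) (q ^ 2) n := by
  induction n with
  | zero => simp
  | succ n ih =>
    rw [mul_add_one, qPoch_succ, qPoch_succ, ih, qPoch_succ, qPoch_succ]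
    ring

theorem continuous_qPoch (q : ℂ) (n : ℕ) : Continuous fun a => qPoch a q n := by
  unfold qPoch
  fun_prop

theorem norm_pow_lt_one (hq : ‖q‖ < 1) {m : ℕ} (hm : m ≠ 0) : ‖q ^ m‖ < 1 := by
  rw [norm_pow]
  exact pow_lt_one₀ (norm_nonneg q) hq hm

theorem norm_sq_lt_one (hq : ‖q‖ < 1) : ‖q ^ 2‖ < 1 := norm_pow_lt_one hq two_ne_zero

theorem mul_pow_ne_one (ha : ‖a‖ < 1) (hq : ‖q‖ < 1) (n : ℕ) : a * q ^ n ≠ 1 := fun h => by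
  have : ‖a * q ^ n‖ < 1 := by
    rw [norm_mul, norm_pow]
    exact mul_lt_one_of_nonneg_of_lt_one_left (norm_nonneg _) ha (pow_le_one₀ (norm_nonneg _) hq.le)
  simp [h] at this

theorem mul_pow_mul_pow_ne_one (h : ∀ k, a * q ^ k ≠ 1) (m k : ℕ) : a * q ^ m * q ^ k ≠ 1 := by
  rw [mul_assoc, ← pow_add]
  exact h _

theorem qPoch_ne_zero (h : ∀ k, a * q ^ k ≠ 1) (n : ℕ) : qPoch a q n ≠ 0 :=
  prod_ne_zero_iff.mpr fun k _ => sub_ne_zero.mpr (h k).symm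

theorem summable_norm_neg_mul_pow (hq : ‖q‖ < 1) (a : ℂ) :
    Summable fun n : ℕ => ‖-(a * q ^ n)‖ := by
  simpa only [norm_neg, norm_mul, norm_pow] using
    (summable_geometric_of_lt_one (norm_nonneg q) hq).mul_left ‖a‖

theorem multipliable_one_sub_mul_pow (hq : ‖q‖ < 1) (a : ℂ) :
    Multipliable fun n : ℕ => 1 - a * q ^ n := by
  simpa only [sub_eq_add_neg] using
    multipliable_one_add_of_summable (summable_norm_neg_mul_pow hq a)

theorem tendsto_qPoch (hq : ‖q‖ < 1) (a : ℂ) :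
    Tendsto (qPoch a q) atTop (𝓝 (qPochInf a q)) :=
  (multipliable_one_sub_mul_pow hq a).tendsto_prod_tprod_nat

theorem qPochInf_ne_zero (hq : ‖q‖ < 1) (h : ∀ k, a * q ^ k ≠ 1) : qPochInf a q ≠ 0 := by
  simp only [qPochInf, sub_eq_add_neg]
  refine tprod_one_add_ne_zero_of_summable (fun k => ?_) (summable_norm_neg_mul_pow hq a)
  rw [← sub_eq_add_neg]
  exact sub_ne_zero.mpr (h k).symm

theorem qPochInf_eq_one_sub_mul (hq : ‖q‖ < 1) (a : ℂ) :
    qPochInf a q = (1 - a) * qPochInf (a * q) q := by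
  have shifted := (tendsto_qPoch hq (a * q)).const_mul (1 - a)
  exact tendsto_nhds_unique ((tendsto_qPoch hq a).comp (tendsto_add_atTop_nat 1))
    (shifted.congr fun n => (qPoch_succ' a q n).symm)

theorem qPochInf_mul_qPochInf_neg (hq : ‖q‖ < 1) (a : ℂ) :
    qPochInf a q * qPochInf (-a) q = qPochInf (a ^ 2) (q ^ 2) :=
  tendsto_nhds_unique ((tendsto_qPoch hq a).mul (tendsto_qPoch hq (-a)))
    ((tendsto_qPoch (norm_sq_lt_one hq) (a ^ 2)).congr fun n => (qPoch_mul_qPoch_neg a q n).symm)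

theorem qPochInf_eq_mul_sq (hq : ‖q‖ < 1) (a : ℂ) :
    qPochInf a q = qPochInf a (q ^ 2) * qPochInf (a * q) (q ^ 2) := by
  have hq2 := norm_sq_lt_one hq
  have doubling : Tendsto (fun n : ℕ => 2 * n) atTop atTop :=
    tendsto_id.const_mul_atTop' two_pos
  exact tendsto_nhds_unique ((tendsto_qPoch hq a).comp doubling)
    (((tendsto_qPoch hq2 a).mul (tendsto_qPoch hq2 (a * q))).congr
      fun n => (qPoch_two_mul a q n).symm)

theorem qPochInf_div_pow (hq : ‖q‖ < 1) (hq₀ : q ≠ 0) (ha : a ≠ 0) (n : ℕ) :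
    q ^ (n + 1).choose 2 * qPochInf (a / q ^ n) q =
      (-a) ^ n * qPoch (q / a) q n * qPochInf a q := by
  induction n with
  | zero => simp
  | succ n ih =>
    have shift : a / q ^ (n + 1) * q = a / q ^ n := by
      field_simp
      ring
    have factor : q ^ (n + 1) * (1 - a / q ^ (n + 1)) = -a * (1 - q / a * q ^ n) := by
      field_simp
      ring
    rw [qPochInf_eq_one_sub_mul hq, shift, qPoch_succ, Nat.choose_succ_succ',
      Nat.choose_one_right, pow_add, pow_succ (-a)]
    linear_combination (q ^ (n + 1) * (1 - a / q ^ (n + 1))) * ih +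
      (-a) ^ n * qPoch (q / a) q n * qPochInf a q * factor

theorem norm_qPoch_le (hq : ‖q‖ < 1) (a : ℂ) (n : ℕ) :
    ‖qPoch a q n‖ ≤ Real.exp (‖a‖ * (1 - ‖q‖)⁻¹) := by
  have geometric : ∑ k ∈ range n, ‖a‖ * ‖q‖ ^ k ≤ ‖a‖ * (1 - ‖q‖)⁻¹ := by
    rw [← mul_sum, ← tsum_geometric_of_lt_one (norm_nonneg q) hq]
    gcongr
    exact (summable_geometric_of_lt_one (norm_nonneg q) hq).sum_le_tsum _ fun _ _ => by positivity
  calc ‖qPoch a q n‖ ≤ ∏ k ∈ range n, (1 + ‖a‖ * ‖q‖ ^ k) := by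
        rw [qPoch, norm_prod]
        refine prod_le_prod (fun _ _ => norm_nonneg _) fun k _ => ?_
        simpa using norm_sub_le 1 (a * q ^ k)
    _ ≤ Real.exp (∑ k ∈ range n, ‖a‖ * ‖q‖ ^ k) :=
        Real.prod_one_add_le_exp_sum _ fun _ => by positivity
    _ ≤ _ := Real.exp_le_exp.mpr geometric

theorem exists_norm_qPoch_mul_pow_le (hq : ‖q‖ < 1) (a : ℂ) :
    ∃ C, ∀ j n, ‖qPoch (a * q ^ j) q n‖ ≤ C := by
  refine ⟨Real.exp (‖a‖ * (1 - ‖q‖)⁻¹), fun j n => (norm_qPoch_le hq _ n).trans ?_⟩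
  have : 0 < 1 - ‖q‖ := sub_pos.mpr hq
  have : ‖a * q ^ j‖ ≤ ‖a‖ := by
    rw [norm_mul, norm_pow]
    exact mul_le_of_le_one_right (norm_nonneg a) (pow_le_one₀ (norm_nonneg q) hq.le)
  gcongr

theorem exists_norm_inv_qPoch_mul_pow_le (hq : ‖q‖ < 1) (h : ∀ k, a * q ^ k ≠ 1) :
    ∃ C, ∀ j n, ‖(qPoch (a * q ^ j) q n)⁻¹‖ ≤ C := by
  obtain ⟨C, hC⟩ := (Metric.isBounded_range_of_tendsto _
    ((tendsto_qPoch hq a).inv₀ (qPochInf_ne_zero hq h))).exists_norm_le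
  refine ⟨Real.exp (‖a‖ * (1 - ‖q‖)⁻¹) * C, fun j n => ?_⟩
  have quotient : (qPoch (a * q ^ j) q n)⁻¹ = qPoch a q j * (qPoch a q (j + n))⁻¹ := by
    rw [qPoch_add, mul_inv, mul_inv_cancel_left₀ (qPoch_ne_zero h j)]
  rw [quotient, norm_mul]
  gcongr
  · exact norm_qPoch_le hq a j
  · exact hC _ ⟨j + n, rfl⟩

end QPochhammer

section Summations

variable {q : ℂ}

theorem tendsto_pow_choose_two_mul_pow (hq : ‖q‖ < 1) (z : ℂ) :
    Tendsto (fun n : ℕ => q ^ n.choose 2 * z ^ n) atTop (𝓝 0) :=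
  (summable_norm_pow_choose_two_mul_pow hq z).of_norm.tendsto_atTop_zero

theorem tendsto_mul_pow_mul (hq : ‖q‖ < 1) (a : ℂ) {m : ℕ} (hm : m ≠ 0) :
    Tendsto (fun N => a * (q ^ m) ^ N) atTop (𝓝 0) := by
  simpa using (tendsto_pow_atTop_nhds_zero_of_norm_lt_one (norm_pow_lt_one hq hm)).const_mul a

/-- The `n`-th term of Euler's series `∑ q^(n(n-1)/2) zⁿ / (q;q)_n`. -/
noncomputable def eulerTerm (z q : ℂ) (n : ℕ) : ℂ :=
  q ^ n.choose 2 * z ^ n / qPoch q q n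

theorem exists_norm_eulerTerm_le (hq : ‖q‖ < 1) :
    ∃ C, ∀ z n, ‖eulerTerm z q n‖ ≤ ‖q ^ n.choose 2 * z ^ n‖ * C := by
  obtain ⟨C, hC⟩ := exists_norm_inv_qPoch_mul_pow_le hq (mul_pow_ne_one hq hq)
  refine ⟨C, fun z n => ?_⟩
  rw [eulerTerm, div_eq_mul_inv, norm_mul]
  gcongr
  simpa using hC 0 n

theorem summable_eulerTerm (hq : ‖q‖ < 1) (z : ℂ) : Summable (eulerTerm z q) := by
  obtain ⟨C, hC⟩ := exists_norm_eulerTerm_le hq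
  exact .of_norm_bounded ((summable_norm_pow_choose_two_mul_pow hq z).mul_right C) (hC z)

theorem tsum_eulerTerm_step (hq : ‖q‖ < 1) (z : ℂ) :
    ∑' n, eulerTerm z q n = (1 + z) * ∑' n, eulerTerm (z * q) q n := by
  have den (n : ℕ) : qPoch q q n ≠ 0 := qPoch_ne_zero (mul_pow_ne_one hq hq) n
  rw [← one_mul (∑' n, eulerTerm z q n)]
  refine mul_tsum_eq_mul_tsum_of_telescope
    (G := fun n => -(q ^ (n + 1).choose 2 * z ^ (n + 1) / qPoch q q n))
    (summable_eulerTerm hq z) (summable_eulerTerm hq _) ?_ (by simp [eulerTerm]) fun n => ?_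
  · have numerator := (tendsto_pow_choose_two_mul_pow hq z).comp (tendsto_add_atTop_nat 1)
    simpa using (numerator.div (tendsto_qPoch hq q)
      (qPochInf_ne_zero hq (mul_pow_ne_one hq hq))).neg
  · have hn := den n
    have hn' := den (n + 1)
    rw [qPoch_succ] at hn'
    have hfactor := right_ne_zero_of_mul hn'
    simp only [eulerTerm, qPoch_succ, Nat.choose_succ_succ' (n + 1), Nat.choose_one_right]
    field_simp
    ring

theorem hasSum_eulerTerm (hq : ‖q‖ < 1) (z : ℂ) :
    HasSum (eulerTerm z q) (qPochInf (-z) q) := by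
  obtain ⟨C, hC⟩ := exists_norm_eulerTerm_le hq
  have C_nonneg : 0 ≤ C := by simpa using (norm_nonneg _).trans (hC 0 0)
  have hsum : 1 * ∑' n, eulerTerm (z * q ^ 0) q n = qPochInf (-z) q * ∑' n, eulerTerm 0 q n := by
    refine mul_tsum_eq_mul_tsum_of_step (F := fun N => eulerTerm (z * q ^ N) q) (c := fun _ => 1)
      (by simp) (tendsto_qPoch hq (-z))
      ((summable_norm_pow_choose_two_mul_pow hq z).mul_right C)
      (fun N n => (hC _ n).trans ?_) (fun n => ?_) fun N => ?_
    · rw [mul_pow, ← mul_assoc, norm_mul _ ((q ^ N) ^ n), norm_pow, norm_pow]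
      gcongr
      exact mul_le_of_le_one_right (norm_nonneg _)
        (pow_le_one₀ (by positivity) (pow_le_one₀ (norm_nonneg q) hq.le))
    · have shift : Tendsto (fun N => z * q ^ N) atTop (𝓝 0) := by
        simpa using tendsto_mul_pow_mul hq z one_ne_zero
      exact ((shift.pow n).const_mul _).div_const _
    · rw [one_mul, tsum_eulerTerm_step hq]
      ring_nf
  have at_zero : ∑' n, eulerTerm 0 q n = 1 := by
    rw [tsum_eq_single 0 fun n hn => by simp [eulerTerm, hn]]
    simp [eulerTerm]
  rw [at_zero, one_mul, mul_one, pow_zero, mul_one] at hsum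
  exact hsum ▸ (summable_eulerTerm hq z).hasSum

/-- The `n`-th term `q^(n(n+1)/2) (a;q)_n (b;q)_n / ((q;q)_n (abq;q²)_n)` of Andrews' `q`-analogue
of Gauss's second summation theorem. -/
noncomputable def gaussTerm (a b q : ℂ) (n : ℕ) : ℂ :=
  q ^ (n + 1).choose 2 * qPoch a q n * qPoch b q n /
    (qPoch q q n * qPoch (a * b * q) (q ^ 2) n)

theorem gaussTerm_comm (a b q : ℂ) : gaussTerm a b q = gaussTerm b a q := by
  funext n
  rw [gaussTerm, gaussTerm, mul_comm a b, mul_right_comm]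

theorem gaussTerm_zero_zero (q : ℂ) : gaussTerm 0 0 q = eulerTerm q q := by
  funext n
  simp [gaussTerm, eulerTerm, Nat.choose_succ_succ', pow_add, mul_comm]

theorem exists_norm_gaussTerm_le (hq : ‖q‖ < 1) {a b : ℂ}
    (hab : ∀ k, a * b * q * (q ^ 2) ^ k ≠ 1) :
    ∃ C, ∀ N n, ‖gaussTerm (a * (q ^ 2) ^ N) b q n‖ ≤ ‖q ^ n.choose 2 * q ^ n‖ * C := by
  obtain ⟨A, hA⟩ := exists_norm_qPoch_mul_pow_le hq a
  obtain ⟨B, hB⟩ := exists_norm_qPoch_mul_pow_le hq b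
  obtain ⟨D, hD⟩ := exists_norm_inv_qPoch_mul_pow_le hq (mul_pow_ne_one hq hq)
  obtain ⟨E, hE⟩ := exists_norm_inv_qPoch_mul_pow_le (norm_sq_lt_one hq) hab
  have A_nonneg : 0 ≤ A := (norm_nonneg _).trans (hA 0 0)
  have B_nonneg : 0 ≤ B := (norm_nonneg _).trans (hB 0 0)
  have D_nonneg : 0 ≤ D := (norm_nonneg _).trans (hD 0 0)
  refine ⟨A * B * (D * E), fun N n => ?_⟩
  have factored : gaussTerm (a * (q ^ 2) ^ N) b q n = q ^ n.choose 2 * q ^ n *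
      (qPoch (a * q ^ (2 * N)) q n * qPoch (b * q ^ 0) q n *
        ((qPoch (q * q ^ 0) q n)⁻¹ * (qPoch (a * b * q * (q ^ 2) ^ N) (q ^ 2) n)⁻¹)) := by
    rw [gaussTerm, Nat.choose_succ_succ', Nat.choose_one_right, pow_zero, mul_one, mul_one,
      pow_mul, show a * (q ^ 2) ^ N * b * q = a * b * q * (q ^ 2) ^ N by ring]
    ring
  rw [factored]
  simp only [norm_mul (q ^ n.choose 2 * q ^ n), norm_mul (_ * _) (_ * _), norm_mul (qPoch _ _ _),
    norm_mul (_⁻¹)]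
  gcongr
  exacts [hA _ n, hB 0 n, hD 0 n, hE N n]

theorem summable_gaussTerm (hq : ‖q‖ < 1) {a b : ℂ} (hab : ∀ k, a * b * q * (q ^ 2) ^ k ≠ 1) :
    Summable (gaussTerm a b q) := by
  obtain ⟨C, hC⟩ := exists_norm_gaussTerm_le hq hab
  exact .of_norm_bounded ((summable_norm_pow_choose_two_mul_pow hq q).mul_right C)
    fun n => by simpa using hC 0 n

/-- The sequence whose differences certify the contiguous relation `tsum_gaussTerm_step`. -/
noncomputable def gaussCert (a b q : ℂ) (n : ℕ) : ℂ :=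
  a * (q ^ (n + 2).choose 2 * qPoch (a * q) q n * qPoch b q (n + 1) /
    (qPoch q q n * qPoch (a * b * q * q ^ 2) (q ^ 2) n))

theorem gaussTerm_sub_gaussTerm (hq : ‖q‖ < 1) {a b : ℂ}
    (hab : ∀ k, a * b * q * (q ^ 2) ^ k ≠ 1) (n : ℕ) :
    (1 - a * b * q) * gaussTerm a b q (n + 1) - (1 - a * q) * gaussTerm (a * q ^ 2) b q (n + 1) =
      gaussCert a b q (n + 1) - gaussCert a b q n := by
  have hab' : ∀ k, a * b * q * q ^ 2 * (q ^ 2) ^ k ≠ 1 := by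
    simpa only [pow_one] using mul_pow_mul_pow_ne_one hab 1
  have unshifted : (1 - a * b * q) * gaussTerm a b q (n + 1) = q ^ (n + 2).choose 2 *
      ((1 - a) * qPoch (a * q) q n) * qPoch b q (n + 1) /
      (qPoch q q (n + 1) * qPoch (a * b * q * q ^ 2) (q ^ 2) n) := by
    have h0 : 1 - a * b * q ≠ 0 := sub_ne_zero.mpr (by simpa using (hab 0).symm)
    rw [gaussTerm, qPoch_succ' (a * b * q), ← qPoch_succ' a, mul_left_comm (qPoch q q _),
      ← mul_div_assoc, mul_div_mul_left _ _ h0]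
  have shifted : (1 - a * q) * gaussTerm (a * q ^ 2) b q (n + 1) = q ^ (n + 2).choose 2 *
      (qPoch (a * q) q n * (1 - a * q * q ^ n) * (1 - a * q * q ^ (n + 1))) *
      qPoch b q (n + 1) / (qPoch q q (n + 1) * qPoch (a * b * q * q ^ 2) (q ^ 2) (n + 1)) := by
    rw [← qPoch_succ, ← qPoch_succ, qPoch_succ' (a * q), mul_assoc a q q, ← pow_two, gaussTerm,
      show a * q ^ 2 * b * q = a * b * q * q ^ 2 by ring]
    ring
  have hn := qPoch_ne_zero (mul_pow_ne_one hq hq) n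
  have hn' := sub_ne_zero.mpr (mul_pow_ne_one hq hq n).symm
  have hd := qPoch_ne_zero hab' n
  have square : (q ^ 2) ^ n = (q ^ n) ^ 2 := pow_right_comm q 2 n
  have hd' := sub_ne_zero.mpr (hab' n).symm
  rw [unshifted, shifted, gaussCert, gaussCert]
  simp only [qPoch_succ, Nat.choose_succ_succ' (n + 2), Nat.choose_one_right, pow_add,
    square] at hd' ⊢
  generalize qPoch (a * b * q * q ^ 2) (q ^ 2) n = D at hd ⊢
  generalize q ^ n = M at hn' hd' ⊢
  generalize hK : 1 - a * b * q * q ^ 2 * M ^ 2 = K at hd' ⊢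
  field_simp
  rw [← hK]
  ring

theorem tsum_gaussTerm_step (hq : ‖q‖ < 1) {a b : ℂ} (hab : ∀ k, a * b * q * (q ^ 2) ^ k ≠ 1) :
    (1 - a * b * q) * ∑' n, gaussTerm a b q n =
      (1 - a * q) * ∑' n, gaussTerm (a * q ^ 2) b q n := by
  have hab' : ∀ k, a * b * q * q ^ 2 * (q ^ 2) ^ k ≠ 1 := by
    simpa only [pow_one] using mul_pow_mul_pow_ne_one hab 1
  refine mul_tsum_eq_mul_tsum_of_telescope (summable_gaussTerm hq hab)
    (summable_gaussTerm hq (by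
      simpa only [show a * q ^ 2 * b * q = a * b * q * q ^ 2 by ring] using hab'))
    ?_ ?_ (gaussTerm_sub_gaussTerm hq hab)
  · have power : Tendsto (fun n : ℕ => q ^ (n + 2).choose 2) atTop (𝓝 0) := by
      simpa [Function.comp_def] using
        (tendsto_pow_choose_two_mul_pow hq 1).comp (tendsto_add_atTop_nat 2)
    have den := (tendsto_qPoch hq q).mul (tendsto_qPoch (norm_sq_lt_one hq) (a * b * q * q ^ 2))
    have den_ne_zero := mul_ne_zero (qPochInf_ne_zero hq (mul_pow_ne_one hq hq))
      (qPochInf_ne_zero (norm_sq_lt_one hq) hab')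
    have num := (power.mul (tendsto_qPoch hq (a * q))).mul
      ((tendsto_qPoch hq b).comp (tendsto_add_atTop_nat 1))
    unfold gaussCert
    simpa using (num.div den den_ne_zero).const_mul a
  · simp only [gaussTerm, zero_add, Nat.choose_succ_self, pow_zero, qPoch_zero, mul_one, div_one,
      gaussCert, Nat.choose_self, pow_one, qPoch_succ, one_mul]
    ring

theorem mul_tsum_gaussTerm (hq : ‖q‖ < 1) {a b : ℂ} (hab : ∀ k, a * b * q * (q ^ 2) ^ k ≠ 1) :
    qPochInf (a * b * q) (q ^ 2) * ∑' n, gaussTerm a b q n =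
      qPochInf (a * q) (q ^ 2) * ∑' n, gaussTerm 0 b q n := by
  have hq2 := norm_sq_lt_one hq
  obtain ⟨C, hC⟩ := exists_norm_gaussTerm_le hq hab
  have shift := tendsto_mul_pow_mul hq a two_ne_zero
  rw [show gaussTerm a b q = gaussTerm (a * (q ^ 2) ^ 0) b q by simp]
  refine mul_tsum_eq_mul_tsum_of_step (F := fun N => gaussTerm (a * (q ^ 2) ^ N) b q)
    (tendsto_qPoch hq2 _) (tendsto_qPoch hq2 _)
    ((summable_norm_pow_choose_two_mul_pow hq q).mul_right C) hC (fun n => ?_) fun N => ?_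
  · have continuous_den : Continuous fun x => qPoch q q n * qPoch (x * b * q) (q ^ 2) n :=
      ((continuous_qPoch (q ^ 2) n).comp (by fun_prop)).const_mul _
    have continuousAt_zero : ContinuousAt (fun x => gaussTerm x b q n) 0 := by
      refine ContinuousAt.div ?_ continuous_den.continuousAt ?_
      · exact (((continuous_qPoch q n).const_mul _).mul_const _).continuousAt
      · simpa using qPoch_ne_zero (mul_pow_ne_one hq hq) n
    exact continuousAt_zero.tendsto.comp shift
  · have step := tsum_gaussTerm_step hq (a := a * (q ^ 2) ^ N) (b := b) fun k => by
      convert hab (N + k) using 1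
      ring
    convert step using 2 <;> ring_nf

theorem hasSum_gaussTerm (hq : ‖q‖ < 1) {a b : ℂ} (hab : ∀ k, a * b * q * (q ^ 2) ^ k ≠ 1) :
    HasSum (gaussTerm a b q) (qPochInf (-q) q * qPochInf (a * q) (q ^ 2) *
      qPochInf (b * q) (q ^ 2) / qPochInf (a * b * q) (q ^ 2)) := by
  have reduce_a := mul_tsum_gaussTerm hq hab
  have reduce_b := mul_tsum_gaussTerm hq (a := b) (b := 0) (by simp)
  rw [gaussTerm_zero_zero, (hasSum_eulerTerm hq q).tsum_eq, gaussTerm_comm, mul_zero, zero_mul,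
    qPochInf_zero_left, one_mul] at reduce_b
  convert (summable_gaussTerm hq hab).hasSum using 1
  rw [div_eq_iff (qPochInf_ne_zero (norm_sq_lt_one hq) hab)]
  linear_combination -reduce_a - qPochInf (a * q) (q ^ 2) * reduce_b

end Summations

section Bailey

variable {q : ℂ}

/-- The `n`-th term `q^(n(n-1)/2) bⁿ (a;q)_n (c;q)_n / ((q²;q²)_n (b;q)_n)` of Andrews' `q`-analogue
of Bailey's summation theorem, which requires `ac = q`. -/
noncomputable def baileyTerm (a c b q : ℂ) (n : ℕ) : ℂ :=
  q ^ n.choose 2 * b ^ n * qPoch a q n * qPoch c q n / (qPoch (q ^ 2) (q ^ 2) n * qPoch b q n)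

theorem exists_norm_baileyTerm_le (hq : ‖q‖ < 1) (a c : ℂ) {b : ℂ} (hb : ∀ k, b * q ^ k ≠ 1) :
    ∃ C, ∀ N n, ‖baileyTerm a c (b * (q ^ 2) ^ N) q n‖ ≤ ‖q ^ n.choose 2 * b ^ n‖ * C := by
  have hq2 := norm_sq_lt_one hq
  obtain ⟨A, hA⟩ := exists_norm_qPoch_mul_pow_le hq a
  obtain ⟨B, hB⟩ := exists_norm_qPoch_mul_pow_le hq c
  obtain ⟨D, hD⟩ := exists_norm_inv_qPoch_mul_pow_le hq2 (mul_pow_ne_one hq2 hq2)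
  obtain ⟨E, hE⟩ := exists_norm_inv_qPoch_mul_pow_le hq hb
  have A_nonneg : 0 ≤ A := (norm_nonneg _).trans (hA 0 0)
  have B_nonneg : 0 ≤ B := (norm_nonneg _).trans (hB 0 0)
  have D_nonneg : 0 ≤ D := (norm_nonneg _).trans (hD 0 0)
  refine ⟨A * B * (D * E), fun N n => ?_⟩
  have factored : baileyTerm a c (b * (q ^ 2) ^ N) q n =
      q ^ n.choose 2 * b ^ n * ((q ^ 2) ^ N) ^ n * (qPoch (a * q ^ 0) q n * qPoch (c * q ^ 0) q n *
        ((qPoch (q ^ 2 * (q ^ 2) ^ 0) (q ^ 2) n)⁻¹ * (qPoch (b * q ^ (2 * N)) q n)⁻¹)) := by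
    rw [baileyTerm, pow_zero, pow_zero, mul_one, mul_one, mul_one, pow_mul]
    ring
  have power : ‖q ^ n.choose 2 * b ^ n * ((q ^ 2) ^ N) ^ n‖ ≤ ‖q ^ n.choose 2 * b ^ n‖ := by
    rw [norm_mul _ (_ ^ n), norm_pow _ n, norm_pow _ N]
    exact mul_le_of_le_one_right (norm_nonneg _)
      (pow_le_one₀ (by positivity) (pow_le_one₀ (norm_nonneg _) hq2.le))
  rw [factored]
  simp only [norm_mul (_ * _ * _) (_ * _ * _), norm_mul (_ * _) (_⁻¹ * _), norm_mul (qPoch _ _ _),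
    norm_mul (_⁻¹)]
  gcongr
  exacts [hA 0 n, hB 0 n, hD 0 n, hE _ n]

theorem summable_baileyTerm (hq : ‖q‖ < 1) (a c : ℂ) {b : ℂ} (hb : ∀ k, b * q ^ k ≠ 1) :
    Summable (baileyTerm a c b q) := by
  obtain ⟨C, hC⟩ := exists_norm_baileyTerm_le hq a c hb
  exact .of_norm_bounded ((summable_norm_pow_choose_two_mul_pow hq b).mul_right C)
    fun n => by simpa using hC 0 n

/-- The sequence whose differences certify the contiguous relation `tsum_baileyTerm_step`. -/
noncomputable def baileyCert (a c b q : ℂ) (n : ℕ) : ℂ :=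
  -(q ^ (n + 1).choose 2 * b ^ (n + 1) * qPoch a q (n + 1) * qPoch c q (n + 1) /
    (qPoch (q ^ 2) (q ^ 2) n * qPoch (b * q ^ 2) q n))

theorem baileyTerm_sub_baileyTerm (hq : ‖q‖ < 1) {a b c : ℂ} (hac : a * c = q)
    (hb : ∀ k, b * q ^ k ≠ 1) (n : ℕ) :
    (1 - b) * (1 - b * q) * baileyTerm a c b q (n + 1) -
        (1 - a * b) * (1 - c * b) * baileyTerm a c (b * q ^ 2) q (n + 1) =
      baileyCert a c b q (n + 1) - baileyCert a c b q n := by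
  have hb' := mul_pow_mul_pow_ne_one hb 2
  have hd := qPoch_ne_zero hb (n + 1)
  have hd' := qPoch_ne_zero hb' n
  have hfirst := sub_ne_zero.mpr (hb' n).symm
  have reindex : (1 - b) * (1 - b * q) * qPoch (b * q ^ 2) q n =
      qPoch b q (n + 1) * (1 - b * q ^ (n + 1)) := by
    rw [← qPoch_succ, qPoch_succ', qPoch_succ', mul_assoc b, ← pow_two, mul_assoc]
  have unshifted : (1 - b) * (1 - b * q) * baileyTerm a c b q (n + 1) =
      q ^ (n + 1).choose 2 * b ^ (n + 1) * qPoch a q (n + 1) * qPoch c q (n + 1) *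
        (1 - b * q ^ (n + 1)) / (qPoch (q ^ 2) (q ^ 2) (n + 1) * qPoch (b * q ^ 2) q n) := by
    have hs := qPoch_ne_zero (mul_pow_ne_one (norm_sq_lt_one hq) (norm_sq_lt_one hq)) (n + 1)
    rw [baileyTerm, ← mul_div_assoc, div_eq_div_iff (mul_ne_zero hs hd) (mul_ne_zero hs hd')]
    linear_combination q ^ (n + 1).choose 2 * b ^ (n + 1) * qPoch a q (n + 1) *
      qPoch c q (n + 1) * qPoch (q ^ 2) (q ^ 2) (n + 1) * reindex
  have hs := qPoch_ne_zero (mul_pow_ne_one (norm_sq_lt_one hq) (norm_sq_lt_one hq)) n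
  have hs' := sub_ne_zero.mpr (mul_pow_ne_one (norm_sq_lt_one hq) (norm_sq_lt_one hq) n).symm
  have square : (q ^ 2) ^ n = (q ^ n) ^ 2 := pow_right_comm q 2 n
  rw [unshifted, baileyTerm, baileyCert, baileyCert]
  rw [qPoch_succ a q (n + 1), qPoch_succ c q (n + 1)]
  simp only [qPoch_succ (q ^ 2), qPoch_succ (b * q ^ 2), Nat.choose_succ_succ' (n + 1),
    Nat.choose_one_right, pow_add, square, mul_pow, pow_one] at hs' hfirst ⊢
  generalize qPoch (b * q ^ 2) q n = D at hd' ⊢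
  generalize qPoch (q ^ 2) (q ^ 2) n = S at hs ⊢
  generalize q ^ n = M at hs' hfirst ⊢
  subst hac
  generalize hK : 1 - b * (a * c) ^ 2 * M = K at hfirst ⊢
  generalize hL : 1 - (a * c) ^ 2 * M ^ 2 = L at hs' ⊢
  field_simp
  rw [← hK, ← hL]
  ring

theorem tsum_baileyTerm_step (hq : ‖q‖ < 1) {a b c : ℂ} (hac : a * c = q)
    (hb : ∀ k, b * q ^ k ≠ 1) :
    (1 - b) * (1 - b * q) * ∑' n, baileyTerm a c b q n =
      (1 - a * b) * (1 - c * b) * ∑' n, baileyTerm a c (b * q ^ 2) q n := by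
  have hq2 := norm_sq_lt_one hq
  have hb' := mul_pow_mul_pow_ne_one hb 2
  refine mul_tsum_eq_mul_tsum_of_telescope (summable_baileyTerm hq a c hb)
    (summable_baileyTerm hq a c hb') ?_ ?_ (baileyTerm_sub_baileyTerm hq hac hb)
  · have num := ((tendsto_pow_choose_two_mul_pow hq b).mul (tendsto_qPoch hq a)).mul
      (tendsto_qPoch hq c)
    have den := (tendsto_qPoch hq2 (q ^ 2)).mul (tendsto_qPoch hq (b * q ^ 2))
    have den_ne_zero := mul_ne_zero (qPochInf_ne_zero hq2 (mul_pow_ne_one hq2 hq2))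
      (qPochInf_ne_zero hq hb')
    unfold baileyCert
    simpa using ((num.comp (tendsto_add_atTop_nat 1)).div den den_ne_zero).neg
  · simp only [baileyTerm, Nat.choose_zero_succ, pow_zero, mul_one, qPoch_zero, div_one, baileyCert,
      zero_add, Nat.choose_succ_self, pow_one, one_mul, qPoch_succ]
    linear_combination (b - b ^ 2) * hac

theorem tsum_baileyTerm_zero (a c q : ℂ) : ∑' n, baileyTerm a c 0 q n = 1 := by
  rw [tsum_eq_single 0 fun n hn => by simp [baileyTerm, hn]]
  simp [baileyTerm]

theorem hasSum_baileyTerm (hq : ‖q‖ < 1) {a b c : ℂ} (hac : a * c = q)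
    (hb : ∀ k, b * q ^ k ≠ 1) :
    HasSum (baileyTerm a c b q)
      (qPochInf (a * b) (q ^ 2) * qPochInf (c * b) (q ^ 2) / qPochInf b q) := by
  have hq2 := norm_sq_lt_one hq
  obtain ⟨C, hC⟩ := exists_norm_baileyTerm_le hq a c hb
  have prod_tendsto (x y : ℂ) :
      Tendsto (fun N => ∏ k ∈ range N, (1 - x * (q ^ 2) ^ k) * (1 - y * (q ^ 2) ^ k)) atTop
        (𝓝 (qPochInf x (q ^ 2) * qPochInf y (q ^ 2))) := by
    simp only [prod_mul_distrib]
    exact (tendsto_qPoch hq2 x).mul (tendsto_qPoch hq2 y)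
  have hsum := mul_tsum_eq_mul_tsum_of_step (F := fun N => baileyTerm a c (b * (q ^ 2) ^ N) q)
    (G := baileyTerm a c 0 q) (prod_tendsto b (b * q)) (prod_tendsto (a * b) (c * b))
    ((summable_norm_pow_choose_two_mul_pow hq b).mul_right C) hC (fun n => ?_) fun N => ?_
  · rw [tsum_baileyTerm_zero, mul_one, ← qPochInf_eq_mul_sq hq, pow_zero, mul_one] at hsum
    rw [← hsum, mul_div_cancel_left₀ _ (qPochInf_ne_zero hq hb)]
    exact (summable_baileyTerm hq a c hb).hasSum
  · have continuousAt_zero : ContinuousAt (fun x => baileyTerm a c x q n) 0 := by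
      refine ContinuousAt.div (by fun_prop)
        ((continuous_qPoch q n).const_mul _).continuousAt ?_
      simpa using qPoch_ne_zero (mul_pow_ne_one hq2 hq2) n
    exact continuousAt_zero.tendsto.comp (tendsto_mul_pow_mul hq b two_ne_zero)
  · have step := tsum_baileyTerm_step hq hac (b := b * (q ^ 2) ^ N) fun k => by
      convert hb (2 * N + k) using 1
      ring
    convert step using 2 <;> ring_nf

end Bailey

theorem zpow_sq_add_mul {𝕜 : Type*} [Field 𝕜] {q : 𝕜} (hq : q ≠ 0) (n : ℕ) (c : ℤ) :
    q ^ ((n : ℤ) ^ 2 + c * n) = (q ^ 2) ^ n.choose 2 * (q ^ (c + 1)) ^ n := by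
  induction n with
  | zero => simp
  | succ n ih =>
    have exponent : ((n + 1 : ℕ) : ℤ) ^ 2 + c * (n + 1 : ℕ) =
        (n ^ 2 + c * n) + (2 : ℕ) * (n : ℕ) + (c + 1) := by
      push_cast
      ring
    rw [exponent, zpow_add₀ hq, zpow_add₀ hq, ih, zpow_mul, zpow_natCast, zpow_natCast,
      Nat.choose_succ_succ', Nat.choose_one_right, pow_add, pow_succ]
    ring

section QuadrupleSum

variable {q : ℂ}

/-- The summand of the quadruple sum. -/
noncomputable def quadTerm (q : ℂ) (i j k l : ℕ) : ℂ :=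
  q ^ ((i : ℤ) ^ 2 + (j : ℤ) ^ 2 + (k : ℤ) ^ 2 + (l : ℤ) ^ 2 - (i : ℤ) * (l : ℤ) -
      (j : ℤ) * (l : ℤ) - (k : ℤ) * (l : ℤ) - (i : ℤ) + (j : ℤ) + (k : ℤ)) /
    (qPoch (q ^ 2) (q ^ 2) i * qPoch (q ^ 2) (q ^ 2) j * qPoch (q ^ 2) (q ^ 2) k *
      qPoch (q ^ 2) (q ^ 2) l)

theorem sum_sq_sub_le_quadTerm_exponent (i j k l : ℕ) :
    ((i : ℤ) ^ 2 + -8 * i) + ((j : ℤ) ^ 2 + -8 * j) + ((k : ℤ) ^ 2 + -8 * k) +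
        ((l : ℤ) ^ 2 + -8 * l) ≤
      8 * ((i : ℤ) ^ 2 + (j : ℤ) ^ 2 + (k : ℤ) ^ 2 + (l : ℤ) ^ 2 - (i : ℤ) * (l : ℤ) -
        (j : ℤ) * (l : ℤ) - (k : ℤ) * (l : ℤ) - (i : ℤ) + (j : ℤ) + (k : ℤ)) := by
  nlinarith [sq_nonneg (7 * (i : ℤ) - 4 * l), sq_nonneg (7 * (j : ℤ) - 4 * l),
    sq_nonneg (7 * (k : ℤ) - 4 * l), sq_nonneg (l : ℤ)]

theorem norm_quadTerm_le {s C : ℝ} (hs : 0 < s) (hs1 : s < 1) (hsq : s ^ 8 = ‖q‖)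
    (hC : ∀ n, ‖(qPoch (q ^ 2) (q ^ 2) n)⁻¹‖ ≤ C) (i j k l : ℕ) :
    ‖quadTerm q i j k l‖ ≤ s ^ ((i : ℤ) ^ 2 + -8 * i) * C * (s ^ ((j : ℤ) ^ 2 + -8 * j) * C *
      (s ^ ((k : ℤ) ^ 2 + -8 * k) * C * (s ^ ((l : ℤ) ^ 2 + -8 * l) * C))) := by
  have C_nonneg : 0 ≤ C := (norm_nonneg _).trans (hC 0)
  have power := zpow_le_zpow_right_of_le_one₀ hs hs1.le (sum_sq_sub_le_quadTerm_exponent i j k l)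
  have base : s ^ (8 : ℤ) = ‖q‖ := by exact_mod_cast hsq
  rw [zpow_mul, base, ← norm_zpow, zpow_add₀ hs.ne', zpow_add₀ hs.ne', zpow_add₀ hs.ne'] at power
  have inverses : ‖(qPoch (q ^ 2) (q ^ 2) i * qPoch (q ^ 2) (q ^ 2) j * qPoch (q ^ 2) (q ^ 2) k *
      qPoch (q ^ 2) (q ^ 2) l)⁻¹‖ ≤ C * C * C * C := by
    simp only [mul_inv, norm_mul]
    gcongr <;> exact hC _
  calc ‖quadTerm q i j k l‖
      ≤ s ^ ((i : ℤ) ^ 2 + -8 * i) * s ^ ((j : ℤ) ^ 2 + -8 * j) * s ^ ((k : ℤ) ^ 2 + -8 * k) *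
          s ^ ((l : ℤ) ^ 2 + -8 * l) * (C * C * C * C) := by
        rw [quadTerm, div_eq_mul_inv, norm_mul]
        gcongr
    _ = _ := by ring

theorem summable_quadTerm (hq : ‖q‖ < 1) (hq₀ : q ≠ 0) :
    Summable fun p : ℕ × ℕ × ℕ × ℕ => quadTerm q p.1 p.2.1 p.2.2.1 p.2.2.2 := by
  have hq2 := norm_sq_lt_one hq
  obtain ⟨C, hC⟩ := exists_norm_inv_qPoch_mul_pow_le hq2 (mul_pow_ne_one hq2 hq2)
  have C_nonneg : 0 ≤ C := (norm_nonneg _).trans (hC 0 0)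
  obtain ⟨s, hs, hs1, hsq⟩ : ∃ s : ℝ, 0 < s ∧ s < 1 ∧ s ^ 8 = ‖q‖ :=
    ⟨‖q‖ ^ ((8 : ℕ) : ℝ)⁻¹, Real.rpow_pos_of_pos (norm_pos_iff.mpr hq₀) _,
      Real.rpow_lt_one (norm_nonneg q) hq (by positivity),
      Real.rpow_inv_natCast_pow (norm_nonneg q) (by norm_num)⟩
  have hs2 : ‖s ^ 2‖ < 1 := by
    rw [norm_pow, Real.norm_of_nonneg hs.le]
    exact pow_lt_one₀ hs.le hs1 two_ne_zero
  have factor : Summable fun n : ℕ => s ^ ((n : ℤ) ^ 2 + -8 * n) * C := by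
    simpa only [zpow_sq_add_mul hs.ne'] using
      (summable_norm_pow_choose_two_mul_pow hs2 _).of_norm.mul_right C
  have factor_nonneg : 0 ≤ fun n : ℕ => s ^ ((n : ℤ) ^ 2 + -8 * n) * C := fun n => by positivity
  have pairs := factor.mul_of_nonneg factor factor_nonneg factor_nonneg
  have pairs_nonneg := fun p : ℕ × ℕ => mul_nonneg (factor_nonneg p.1) (factor_nonneg p.2)
  have triples := factor.mul_of_nonneg pairs factor_nonneg pairs_nonneg
  have triples_nonneg :=
    fun p : ℕ × ℕ × ℕ => mul_nonneg (factor_nonneg p.1) (pairs_nonneg p.2)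
  exact .of_norm_bounded (factor.mul_of_nonneg triples factor_nonneg triples_nonneg)
    fun p => norm_quadTerm_le hs hs1 hsq (fun n => by simpa using hC 0 n) p.1 p.2.1 p.2.2.1 p.2.2.2

theorem quadTerm_eq_mul_eulerTerm (hq₀ : q ≠ 0) (i j k l : ℕ) :
    quadTerm q i j k l = q ^ (l * l) / qPoch (q ^ 2) (q ^ 2) l *
      (eulerTerm (1 / q ^ l) (q ^ 2) i *
        (eulerTerm (q ^ 2 / q ^ l) (q ^ 2) j * eulerTerm (q ^ 2 / q ^ l) (q ^ 2) k)) := by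
  have exponent : (i : ℤ) ^ 2 + (j : ℤ) ^ 2 + (k : ℤ) ^ 2 + (l : ℤ) ^ 2 - i * l - j * l - k * l -
      i + j + k = ((l * l : ℕ) : ℤ) + (i ^ 2 + (-1 - l) * i) + (j ^ 2 + (1 - l) * j) +
        (k ^ 2 + (1 - l) * k) := by
    push_cast
    ring
  have base_i : q ^ (-1 - (l : ℤ) + 1) = 1 / q ^ l := by
    rw [sub_add_eq_add_sub, neg_add_cancel, zpow_sub₀ hq₀, zpow_zero, zpow_natCast]
  have base_jk : q ^ (1 - (l : ℤ) + 1) = q ^ 2 / q ^ l := by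
    rw [sub_add_eq_add_sub, one_add_one_eq_two, zpow_sub₀ hq₀, zpow_natCast]
    rfl
  rw [quadTerm, exponent, zpow_add₀ hq₀, zpow_add₀ hq₀, zpow_add₀ hq₀, zpow_natCast,
    zpow_sq_add_mul hq₀, zpow_sq_add_mul hq₀, zpow_sq_add_mul hq₀, base_i, base_jk]
  simp only [eulerTerm, div_eq_mul_inv, mul_inv]
  ring

/-- The sum of `quadTerm q i j k l` over `i, j, k`, evaluated by Euler's series. -/
noncomputable def fiberTerm (q : ℂ) (l : ℕ) : ℂ :=
  q ^ (l * l) / qPoch (q ^ 2) (q ^ 2) l *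
    (qPochInf (-(1 / q ^ l)) (q ^ 2) * qPochInf (-(q ^ 2 / q ^ l)) (q ^ 2) ^ 2)

theorem hasSum_quadTerm_fiber (hq : ‖q‖ < 1) (hq₀ : q ≠ 0) (l : ℕ) :
    HasSum (fun p : ℕ × ℕ × ℕ => quadTerm q p.1 p.2.1 p.2.2 l) (fiberTerm q l) := by
  have euler (z : ℂ) := hasSum_eulerTerm (norm_sq_lt_one hq) z
  have euler_norm (z : ℂ) : Summable fun n => ‖eulerTerm z (q ^ 2) n‖ := (euler z).summable.norm
  have pairs (w : ℂ) :=
    hasSum_mul_of_summable_norm (euler w) (euler w) (euler_norm w) (euler_norm w)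
  have triples (z w : ℂ) := hasSum_mul_of_summable_norm (euler z) (pairs w) (euler_norm z)
    ((euler_norm w).mul_norm (euler_norm w))
  simp only [fiberTerm, quadTerm_eq_mul_eulerTerm hq₀, pow_two (qPochInf _ _)]
  exact (triples _ _).mul_left _

theorem hasSum_fiberTerm (hq : ‖q‖ < 1) (hq₀ : q ≠ 0) :
    HasSum (fiberTerm q)
      (∑' p : ℕ × ℕ × ℕ × ℕ, quadTerm q p.1 p.2.1 p.2.2.1 p.2.2.2) := by
  let reorder : ℕ × ℕ × ℕ × ℕ ≃ ℕ × ℕ × ℕ × ℕ :=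
    ⟨fun p => (p.2.1, p.2.2.1, p.2.2.2, p.1), fun p => (p.2.2.2, p.1, p.2.1, p.2.2.1),
      fun _ => rfl, fun _ => rfl⟩
  exact (reorder.hasSum_iff.mpr (summable_quadTerm hq hq₀).hasSum).prod_fiberwise
    (hasSum_quadTerm_fiber hq hq₀)

end QuadrupleSum

section JProducts

variable {q : ℂ}

theorem J_ne_zero (hq : ‖q‖ < 1) {m : ℕ} (hm : m ≠ 0) : J q m ≠ 0 :=
  have hqm := norm_pow_lt_one hq hm
  qPochInf_ne_zero hqm (mul_pow_ne_one hqm hqm)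

theorem qPochInf_pow_pow_two_mul (hq : ‖q‖ < 1) {m : ℕ} (hm : m ≠ 0) :
    qPochInf (q ^ m) (q ^ (2 * m)) = J q m / J q (2 * m) := by
  rw [eq_div_iff (J_ne_zero hq (by positivity)), J, J,
    qPochInf_eq_mul_sq (norm_pow_lt_one hq hm), ← pow_mul, ← pow_add, mul_comm m, two_mul]

theorem qPochInf_neg_pow_pow (hq : ‖q‖ < 1) {m : ℕ} (hm : m ≠ 0) :
    qPochInf (-q ^ m) (q ^ m) = J q (2 * m) / J q m := by
  rw [eq_div_iff (J_ne_zero hq hm), J, J, mul_comm,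
    qPochInf_mul_qPochInf_neg (norm_pow_lt_one hq hm), ← pow_mul, mul_comm m]

theorem qPochInf_neg_pow_pow_two_mul (hq : ‖q‖ < 1) {m : ℕ} (hm : m ≠ 0) :
    qPochInf (-q ^ m) (q ^ (2 * m)) = J q (2 * m) ^ 2 / (J q m * J q (4 * m)) := by
  have h2m : 2 * m ≠ 0 := by positivity
  have product := qPochInf_mul_qPochInf_neg (norm_pow_lt_one hq h2m) (q ^ m)
  rw [← pow_mul, ← pow_mul, mul_comm m, mul_comm (2 * m), qPochInf_pow_pow_two_mul hq h2m,
    qPochInf_pow_pow_two_mul hq hm, ← mul_assoc, show 2 * 2 * m = 4 * m from rfl] at product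
  have := J_ne_zero hq hm
  have := J_ne_zero hq h2m
  have : J q (4 * m) ≠ 0 := J_ne_zero hq (by positivity)
  field_simp at product ⊢
  linear_combination product

end JProducts

section Parity

variable {q : ℂ}

theorem qPoch_self_two_mul (q : ℂ) (m : ℕ) :
    qPoch q q (2 * m) = qPoch q (q ^ 2) m * (qPoch q q m * qPoch (-q) q m) := by
  rw [qPoch_two_mul, qPoch_mul_qPoch_neg, pow_two]

theorem qPoch_sq_two_mul_add_one (q : ℂ) (m : ℕ) :
    qPoch (q ^ 2) (q ^ 2) (2 * m + 1) = (1 - q) * qPoch (q ^ 3) (q ^ 2) m *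
      qPoch (-q) (q ^ 2) (m + 1) * qPoch ((q ^ 2) ^ 2) ((q ^ 2) ^ 2) m := by
  have odd_factors : qPoch (q ^ 2) ((q ^ 2) ^ 2) (m + 1) =
      (1 - q) * qPoch (q ^ 3) (q ^ 2) m * qPoch (-q) (q ^ 2) (m + 1) := by
    rw [← qPoch_mul_qPoch_neg, qPoch_succ' q, pow_succ' q 2]
  rw [← odd_factors, qPoch_succ, qPoch_succ, qPoch_two_mul, ← pow_two, pow_mul]
  ring

theorem fiberTerm_two_mul (hq : ‖q‖ < 1) (hq₀ : q ≠ 0) (m : ℕ) :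
    fiberTerm q (2 * m) =
      2 * qPochInf (-q ^ 2) (q ^ 2) ^ 3 * gaussTerm (-1) (-1) (q ^ 2) m := by
  have hq2 := norm_sq_lt_one hq
  have hp₀ : q ^ 2 ≠ 0 := pow_ne_zero 2 hq₀
  have theta_one := qPochInf_div_pow hq2 hp₀ (neg_ne_zero.mpr one_ne_zero) m
  have theta_sq := qPochInf_div_pow hq2 hp₀ (neg_ne_zero.mpr hp₀) m
  rw [qPochInf_eq_one_sub_mul hq2 (-1), neg_neg, one_pow, one_mul, div_neg, div_one, neg_one_mul,
    sub_neg_eq_add, one_add_one_eq_two] at theta_one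
  rw [neg_neg, div_neg, div_self hp₀] at theta_sq
  have power : q ^ (2 * m * (2 * m)) * ((q ^ 2) ^ m) ^ 2 = ((q ^ 2) ^ (m + 1).choose 2) ^ 4 := by
    simp only [← pow_mul, ← pow_add]
    congr 1
    linarith [two_mul_choose_succ_two m]
  have hc : (q ^ 2) ^ (m + 1).choose 2 ≠ 0 := pow_ne_zero _ hp₀
  have hn : qPoch (-q ^ 2) (q ^ 2) m ≠ 0 :=
    qPoch_ne_zero (mul_pow_ne_one (by rwa [norm_neg]) hq2) m
  rw [fiberTerm, gaussTerm, qPoch_self_two_mul, pow_mul q 2 m, ← neg_div, ← neg_div,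
    neg_one_mul (-1 : ℂ), neg_neg, one_mul]
  rw [mul_comm, ← eq_div_iff hc] at theta_one theta_sq
  rw [theta_one, theta_sq]
  generalize (q ^ 2) ^ (m + 1).choose 2 = c at *
  field_simp
  linear_combination qPochInf (-q ^ 2) (q ^ 2) ^ 3 * qPoch (-1) (q ^ 2) m ^ 2 /
    (qPoch (q ^ 2) (q ^ 4) m * qPoch (q ^ 2) (q ^ 2) m) * power

theorem qPochInf_neg_div_sq_pow (hq : ‖q‖ < 1) (hq₀ : q ≠ 0) (n : ℕ) :
    qPochInf (-q / (q ^ 2) ^ n) (q ^ 2) =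
      q ^ n * qPoch (-q) (q ^ 2) n * qPochInf (-q) (q ^ 2) / (q ^ 2) ^ (n + 1).choose 2 := by
  have hp₀ : q ^ 2 ≠ 0 := pow_ne_zero 2 hq₀
  have theta := qPochInf_div_pow (norm_sq_lt_one hq) hp₀ (neg_ne_zero.mpr hq₀) n
  rw [eq_div_iff (pow_ne_zero _ hp₀), mul_comm, theta, neg_neg, div_neg, pow_two,
    mul_div_cancel_right₀ _ hq₀]

theorem fiberTerm_two_mul_add_one (hq : ‖q‖ < 1) (hq₀ : q ≠ 0) (m : ℕ) :
    fiberTerm q (2 * m + 1) =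
      qPochInf (-q) (q ^ 2) ^ 3 / (1 - q) * baileyTerm (-q) (-q) (q ^ 3) (q ^ 2) m := by
  have hq2 := norm_sq_lt_one hq
  have hc (n : ℕ) : (q ^ 2) ^ n.choose 2 ≠ 0 := pow_ne_zero _ (pow_ne_zero 2 hq₀)
  have hn : qPoch (-q) (q ^ 2) (m + 1) ≠ 0 :=
    qPoch_ne_zero (mul_pow_ne_one (by rwa [norm_neg]) hq2) _
  have arg_succ : -(1 / q ^ (2 * m + 1)) = -q / (q ^ 2) ^ (m + 1) := by
    rw [← pow_mul]
    field_simp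
    ring
  have arg : -(q ^ 2 / q ^ (2 * m + 1)) = -q / (q ^ 2) ^ m := by
    rw [← pow_mul]
    field_simp
    ring
  have power : q ^ ((2 * m + 1) * (2 * m + 1)) * q ^ (m + 1) * (q ^ m) ^ 2 =
      (q ^ 2) ^ m.choose 2 * (q ^ 3) ^ m *
        ((q ^ 2) ^ (m + 1 + 1).choose 2 * ((q ^ 2) ^ (m + 1).choose 2) ^ 2) := by
    have pascal : (m + 1).choose 2 = m + m.choose 2 := by
      rw [Nat.choose_succ_succ', Nat.choose_one_right]
    simp only [← pow_mul, ← pow_add]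
    congr 1
    linarith [two_mul_choose_succ_two m, two_mul_choose_succ_two (m + 1)]
  rw [fiberTerm, baileyTerm, qPoch_sq_two_mul_add_one, arg_succ, arg,
    qPochInf_neg_div_sq_pow hq hq₀, qPochInf_neg_div_sq_pow hq hq₀]
  have := hc (m + 1)
  have := hc (m + 1 + 1)
  generalize (q ^ 2) ^ (m + 1).choose 2 = c at *
  generalize (q ^ 2) ^ (m + 1 + 1).choose 2 = c' at *
  field_simp
  linear_combination qPochInf (-q) (q ^ 2) ^ 3 * qPoch (-q) (q ^ 2) m ^ 2 /
    ((1 - q) * qPoch (q ^ 3) (q ^ 2) m * qPoch (q ^ 4) (q ^ 4) m) * power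

theorem hasSum_fiberTerm_even (hq : ‖q‖ < 1) (hq₀ : q ≠ 0) :
    HasSum (fun m => fiberTerm q (2 * m)) (2 * J q 4 ^ 9 / (J q 2 ^ 7 * J q 8 ^ 2)) := by
  have hq2 := norm_sq_lt_one hq
  have gauss := (hasSum_gaussTerm (a := -1) (b := -1) hq2
    (by simpa using mul_pow_ne_one hq2 (norm_sq_lt_one hq2))).mul_left
      (2 * qPochInf (-q ^ 2) (q ^ 2) ^ 3)
  have neg_base := qPochInf_neg_pow_pow hq two_ne_zero
  have neg_double := qPochInf_neg_pow_pow_two_mul hq two_ne_zero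
  have pos_double := qPochInf_pow_pow_two_mul hq two_ne_zero
  simp only [Nat.reduceMul] at neg_base neg_double pos_double
  simp only [← fiberTerm_two_mul hq hq₀] at gauss
  simp only [neg_mul_neg, one_mul, neg_one_mul, ← pow_mul, Nat.reduceMul, neg_base, neg_double,
    pos_double] at gauss
  have h2 : J q 2 ≠ 0 := J_ne_zero hq two_ne_zero
  have h4 : J q 4 ≠ 0 := J_ne_zero hq four_ne_zero
  have h8 : J q 8 ≠ 0 := J_ne_zero hq (by simp)
  have value : 2 * (J q 4 / J q 2) ^ 3 * (J q 4 / J q 2 * (J q 4 ^ 2 / (J q 2 * J q 8)) *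
      (J q 4 ^ 2 / (J q 2 * J q 8)) / (J q 2 / J q 4)) =
      2 * J q 4 ^ 9 / (J q 2 ^ 7 * J q 8 ^ 2) := by
    field_simp
  rwa [value] at gauss

theorem hasSum_fiberTerm_odd (hq : ‖q‖ < 1) (hq₀ : q ≠ 0) :
    HasSum (fun m => fiberTerm q (2 * m + 1))
      (J q 2 ^ 7 * J q 8 ^ 2 / (J q 1 ^ 4 * J q 4 ^ 5)) := by
  have hq2 := norm_sq_lt_one hq
  have bailey := (hasSum_baileyTerm (a := -q) (c := -q) (b := q ^ 3) hq2 (by ring)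
    (mul_pow_ne_one (norm_pow_lt_one hq three_ne_zero) hq2)).mul_left
      (qPochInf (-q) (q ^ 2) ^ 3 / (1 - q))
  have neg_one := qPochInf_neg_pow_pow_two_mul hq one_ne_zero
  have neg_four := qPochInf_neg_pow_pow hq four_ne_zero
  have pos_one := qPochInf_pow_pow_two_mul hq one_ne_zero
  simp only [Nat.reduceMul, pow_one] at neg_one neg_four pos_one
  have split : (1 - q) * qPochInf (q ^ 3) (q ^ 2) = J q 1 / J q 2 := by
    rw [← pos_one, qPochInf_eq_one_sub_mul hq2 q, ← pow_succ' q 2]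
  simp only [← fiberTerm_two_mul_add_one hq hq₀] at bailey
  simp only [neg_mul, ← pow_succ', ← pow_mul, Nat.reduceMul, Nat.reduceAdd, neg_one, neg_four,
    div_mul_div_comm, split] at bailey
  have h1 : J q 1 ≠ 0 := J_ne_zero hq one_ne_zero
  have h2 : J q 2 ≠ 0 := J_ne_zero hq two_ne_zero
  have h4 : J q 4 ≠ 0 := J_ne_zero hq four_ne_zero
  have value : (J q 2 ^ 2 / (J q 1 * J q 4)) ^ 3 * (J q 8 * J q 8 / (J q 4 * J q 4)) /
      (J q 1 / J q 2) = J q 2 ^ 7 * J q 8 ^ 2 / (J q 1 ^ 4 * J q 4 ^ 5) := by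
    field_simp
  rwa [value] at bailey

end Parity

theorem stmt_1 (q : ℂ) (h0 : 0 < ‖q‖) (h1 : ‖q‖ < 1) :
    (∑' p : ℕ × ℕ × ℕ × ℕ,
      (fun (i j k l : ℕ) =>
        q ^ (((i:ℤ)^2 + (j:ℤ)^2 + (k:ℤ)^2 + (l:ℤ)^2 - (i:ℤ)*(l:ℤ) - (j:ℤ)*(l:ℤ) - (k:ℤ)*(l:ℤ) - (i:ℤ) + (j:ℤ) + (k:ℤ)) : ℤ) /
          (qPoch (q ^ 2) (q ^ 2) i * qPoch (q ^ 2) (q ^ 2) j * qPoch (q ^ 2) (q ^ 2) k * qPoch (q ^ 2) (q ^ 2) l))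
        p.1 p.2.1 p.2.2.1 p.2.2.2)
    = 2 * (J q 4)^9 / ((J q 2)^7 * (J q 8)^2)
      + (J q 2)^7 * (J q 8)^2 / ((J q 1)^4 * (J q 4)^5) := by
  have hq₀ : q ≠ 0 := norm_pos_iff.mp h0
  have parity := (hasSum_fiberTerm_even h1 hq₀).even_add_odd (hasSum_fiberTerm_odd h1 hq₀)
  exact (hasSum_fiberTerm h1 hq₀).unique parity
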